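/- arXiv:2203.03641 — 2 statements merged into one kernel-verified Lean document; each statement's English description precedes it below -/
import Mathlib

section
/- Let A be a sliding finite-dimensional F-algebra, S a finite generating set of A, and (m_1, …, m_d) the characteristic sequence of S. Then m_{j+1} − m_j ≤ 1 for all j = 1, …, d−1; equivalently, for every k ≥ 1 with L_k(S) ≠ A one has dim L_{k+1}(S) > dim L_k(S). -/
/-!
Framework: length of finite-dimensional not necessarily associative,
not necessarily unital algebras (non-unital convention: `L_0(S) = 0`).
The multiplication of the algebra is passed explicitly as a binary
operation `μ`, so that the same definitions apply to an algebra, to its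
commutator algebra, to a Lie bracket, etc.
-/

open Submodule Module

/-- `IsWord μ S k w`: `w` is a product of `k` elements of `S` (with respect to the
multiplication `μ`) with some placement of parentheses. -/
inductive IsWord {A : Type*} (μ : A → A → A) (S : Set A) : ℕ → A → Prop
  | base {a : A} (ha : a ∈ S) : IsWord μ S 1 a
  | mul {m n : ℕ} {a b : A} (ha : IsWord μ S m a) (hb : IsWord μ S n b) :
      IsWord μ S (m + n) (μ a b)

/-- The multiplication of an algebra, as a plain binary operation. -/
def amul (A : Type*) [Mul A] : A → A → A := fun a b => a * b

section
variable (F : Type*) {A : Type*} [Field F] [AddCommGroup A] [Module F A]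

/-- `L_i(S)`: the linear span of all words in `S` of length at most `i`
(non-unital convention, so `L_0(S) = 0`). -/
def Lset (μ : A → A → A) (S : Set A) (i : ℕ) : Submodule F A :=
  Submodule.span F {a | ∃ k, k ≤ i ∧ IsWord μ S k a}

/-- `S` generates the algebra, i.e. the span of all words in `S` is everything. -/
def Generates (μ : A → A → A) (S : Set A) : Prop :=
  Submodule.span F {a | ∃ k, IsWord μ S k a} = ⊤

/-- `l(S)`: the length of a generating set `S`, the least `k` with `L_k(S) = A`. -/
noncomputable def lenSet (μ : A → A → A) (S : Set A) : ℕ :=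
  sInf {k | Lset F μ S k = ⊤}

/-- An irreducible word of length `k` in `S`. -/
def IrredWord (μ : A → A → A) (S : Set A) (k : ℕ) (w : A) : Prop :=
  IsWord μ S k w ∧ ∀ m, m < k → w ∉ Lset F μ S m

end

section
variable {A : Type*}

/-- The set `P(x,y,z)` of monomials. -/
def Pset (μ : A → A → A) (x y z : A) : Set A :=
  {μ (μ x z) y, μ (μ z x) y, μ (μ y z) x, μ (μ z y) x,
   μ x (μ z y), μ x (μ y z), μ y (μ x z), μ y (μ z x),
   μ x y, μ y x, μ x z, μ z x, μ y z, μ z y, x, y, z}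

/-- The set `Q_l(x,y,z)` of monomials. -/
def Qlset (μ : A → A → A) (x y z : A) : Set A :=
  {μ x (μ z y), μ x (μ y z), μ y (μ x z), μ y (μ z x),
   μ x y, μ y x, μ x z, μ z x, μ y z, μ z y, x, y, z}

/-- The set `Q_r(x,y,z)` of monomials. -/
def Qrset (μ : A → A → A) (x y z : A) : Set A :=
  {μ (μ x z) y, μ (μ z x) y, μ (μ y z) x, μ (μ z y) x,
   μ x y, μ y x, μ x z, μ z x, μ y z, μ z y, x, y, z}

end

section
variable (F : Type*) {A : Type*} [Field F] [AddCommGroup A] [Module F A]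

/-- A mixing algebra: `(xy)z` and `z(xy)` lie in the span of `P(x,y,z)`. -/
def IsMixing (μ : A → A → A) : Prop :=
  ∀ x y z : A, μ (μ x y) z ∈ Submodule.span F (Pset μ x y z) ∧
    μ z (μ x y) ∈ Submodule.span F (Pset μ x y z)

/-- A sliding algebra: either `z(xy)` always lies in the span of `Q_r(x,y,z)`, or
`(xy)z` always lies in the span of `Q_l(x,y,z)`. -/
def IsSliding (μ : A → A → A) : Prop :=
  (∀ x y z : A, μ z (μ x y) ∈ Submodule.span F (Qrset μ x y z)) ∨
  (∀ x y z : A, μ (μ x y) z ∈ Submodule.span F (Qlset μ x y z))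

end

/-!
Suppose `(xy)z` always lies in the span of `Q_l(x,y,z)`; the other kind of sliding is this one for
the opposite multiplication. Rewriting a product `(xy)z` of words through `Q_l(x,y,z)` yields
shorter words and products of the same length whose left factor, `x` or `y`, is shorter than `xy`.
Iterating until the left factor is a generator, every word is a combination of right-nested words
`s₁(s₂(⋯))`. So if `L_{k+1}(S) = L_k(S)`, then `L_k(S)`, being stable under left multiplication by
`S`, contains all words.
-/

section Words

variable {A : Type*} {μ : A → A → A} {S : Set A}

namespace IsWord

theorem length_pos {n : ℕ} {w : A} (hw : IsWord μ S n w) : 0 < n := by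
  induction hw <;> omega

protected theorem flip {n : ℕ} {w : A} (hw : IsWord μ S n w) : IsWord (flip μ) S n w := by
  induction hw with
  | base ha => exact .base ha
  | mul _ _ iha ihb => exact Nat.add_comm _ _ ▸ ihb.mul iha

theorem isWord_or_eq_mul_of_mem_Qlset {i j l : ℕ} {x y z t : A} (hx : IsWord μ S i x)
    (hy : IsWord μ S j y) (hz : IsWord μ S l z) (ht : t ∈ Qlset μ x y z) :
    (∃ n < i + j + l, IsWord μ S n t) ∨
      ∃ m n u v, m < i + j ∧ m + n = i + j + l ∧ IsWord μ S m u ∧ IsWord μ S n v ∧ t = μ u v := by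
  have hi := hx.length_pos
  have hj := hy.length_pos
  have hl := hz.length_pos
  rcases ht with rfl | rfl | rfl | rfl | rfl | rfl | rfl | rfl | rfl | rfl | rfl | rfl | rfl
  · exact .inr ⟨_, _, _, _, by omega, by omega, hx, hz.mul hy, rfl⟩
  · exact .inr ⟨_, _, _, _, by omega, by omega, hx, hy.mul hz, rfl⟩
  · exact .inr ⟨_, _, _, _, by omega, by omega, hy, hx.mul hz, rfl⟩
  · exact .inr ⟨_, _, _, _, by omega, by omega, hy, hz.mul hx, rfl⟩
  · exact .inl ⟨_, by omega, hx.mul hy⟩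
  · exact .inl ⟨_, by omega, hy.mul hx⟩
  · exact .inl ⟨_, by omega, hx.mul hz⟩
  · exact .inl ⟨_, by omega, hz.mul hx⟩
  · exact .inl ⟨_, by omega, hy.mul hz⟩
  · exact .inl ⟨_, by omega, hz.mul hy⟩
  · exact .inl ⟨_, by omega, hx⟩
  · exact .inl ⟨_, by omega, hy⟩
  · exact .inl ⟨_, by omega, hz⟩

end IsWord

theorem isWord_flip_iff {n : ℕ} {w : A} : IsWord (flip μ) S n w ↔ IsWord μ S n w :=
  ⟨IsWord.flip, IsWord.flip⟩

theorem Qlset_flip (μ : A → A → A) (x y z : A) : Qlset (flip μ) x y z = Qrset μ y x z := by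
  ext t
  simp only [Qlset, Qrset, flip, Set.mem_insert_iff, Set.mem_singleton_iff]
  tauto

end Words

section Sliding

variable {F A : Type*} [Field F] [AddCommGroup A] [Module F A]

section Multiplication

variable {μ : A → A → A} {S : Set A}

variable (F) in
/-- Left sliding, the second alternative in `IsSliding`: it allows the left factor of a product
to be shortened. The first alternative is left sliding of the opposite multiplication `flip μ`. -/
def IsLeftSliding (μ : A → A → A) : Prop :=
  ∀ x y z : A, μ (μ x y) z ∈ span F (Qlset μ x y z)

theorem isSliding_iff : IsSliding F μ ↔ IsLeftSliding F (flip μ) ∨ IsLeftSliding F μ := by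
  refine or_congr_left ?_
  simp only [IsLeftSliding, Qlset_flip, flip]
  exact forall_comm

theorem Lset_flip (μ : A → A → A) (S : Set A) (k : ℕ) : Lset F (flip μ) S k = Lset F μ S k := by
  simp only [Lset, isWord_flip_iff]

theorem generates_flip_iff : Generates F (flip μ) S ↔ Generates F μ S := by
  simp only [Generates, isWord_flip_iff]

theorem Lset_mono (μ : A → A → A) (S : Set A) : Monotone (Lset F μ S) :=
  fun _ _ hij => span_mono fun _ ⟨k, hk, hw⟩ => ⟨k, hk.trans hij, hw⟩

theorem subset_Lset {k : ℕ} (hk : 1 ≤ k) : S ⊆ Lset F μ S k :=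
  fun _ hs => subset_span ⟨1, hk, .base hs⟩

namespace IsLeftSliding

variable {M : Submodule F A}

theorem mul_mem_of_isWord (hμ : IsLeftSliding F μ) (hM : ∀ s ∈ S, ∀ m ∈ M, μ s m ∈ M)
    {p q : ℕ} {a b : A} (ha : IsWord μ S p a) (hb : IsWord μ S q b)
    (hshort : ∀ n < p + q, ∀ w, IsWord μ S n w → w ∈ M) : μ a b ∈ M := by
  induction p using Nat.strong_induction_on generalizing q a b with
  | _ p ih =>
    cases ha with
    | base ha => exact hM a ha b (hshort q (by omega) b hb)
    | mul hx hy =>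
      refine span_le.2 (fun t ht => ?_) (hμ _ _ b)
      rcases hx.isWord_or_eq_mul_of_mem_Qlset hy hb ht with
        ⟨n, hn, ht⟩ | ⟨m, n, u, v, hm, hmn, hu, hv, rfl⟩
      · exact hshort n hn t ht
      · exact ih m hm hu hv (hmn ▸ hshort)

theorem mem_of_isWord (hμ : IsLeftSliding F μ) (hS : S ⊆ M) (hM : ∀ s ∈ S, ∀ m ∈ M, μ s m ∈ M)
    {n : ℕ} {w : A} (hw : IsWord μ S n w) : w ∈ M := by
  induction n using Nat.strong_induction_on generalizing w with
  | _ n ih =>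
    cases hw with
    | base hs => exact hS hs
    | mul ha hb => exact hμ.mul_mem_of_isWord hM ha hb fun m hm _ => ih m hm

theorem eq_top_of_generates (hμ : IsLeftSliding F μ) (hgen : Generates F μ S) (hS : S ⊆ M)
    (hM : ∀ s ∈ S, ∀ m ∈ M, μ s m ∈ M) : M = ⊤ :=
  top_unique <| hgen.symm.trans_le <| span_le.2 fun _ ⟨_, hw⟩ => hμ.mem_of_isWord hS hM hw

end IsLeftSliding

end Multiplication

theorem mul_mem_Lset_succ (μ : A → A →ₗ[F] A) {S : Set A} {k : ℕ} {s m : A} (hs : s ∈ S)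
    (hm : m ∈ Lset F (fun a b => μ a b) S k) : μ s m ∈ Lset F (fun a b => μ a b) S (k + 1) := by
  suffices Lset F (fun a b => μ a b) S k ≤ (Lset F (fun a b => μ a b) S (k + 1)).comap (μ s) from
    this hm
  exact span_le.2 fun w ⟨i, hi, hw⟩ => subset_span ⟨1 + i, by omega, (IsWord.base hs).mul hw⟩

theorem IsLeftSliding.Lset_lt_Lset_succ {μ : A → A →ₗ[F] A} {S : Set A} {k : ℕ}
    (hμ : IsLeftSliding F (fun a b => μ a b)) (hgen : Generates F (fun a b => μ a b) S)
    (hk : 1 ≤ k) (hne : Lset F (fun a b => μ a b) S k ≠ ⊤) :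
    Lset F (fun a b => μ a b) S k < Lset F (fun a b => μ a b) S (k + 1) := by
  refine (Lset_mono _ S k.le_succ).lt_of_ne fun heq => hne ?_
  exact hμ.eq_top_of_generates hgen (subset_Lset hk) fun s hs m hm =>
    heq ▸ mul_mem_Lset_succ μ hs hm

theorem sliding_char_seq_steps_le_one_general (μ : A →ₗ[F] A →ₗ[F] A) {S : Set A} {k : ℕ}
    (hslide : IsSliding F (fun a b => μ a b)) (hgen : Generates F (fun a b => μ a b) S)
    (hk : 1 ≤ k) (hne : Lset F (fun a b => μ a b) S k ≠ ⊤) :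
    Lset F (fun a b => μ a b) S k < Lset F (fun a b => μ a b) S (k + 1) := by
  rcases isSliding_iff.1 hslide with hflip | hleft
  · rw [← generates_flip_iff] at hgen
    rw [← Lset_flip] at hne
    rw [← Lset_flip, ← Lset_flip _ _ (k + 1)]
    exact IsLeftSliding.Lset_lt_Lset_succ (μ := μ.flip) hflip hgen hk hne
  · exact hleft.Lset_lt_Lset_succ hgen hk hne

end Sliding

/-- for a sliding algebra, consecutive terms of the characteristic sequence
of a finite generating set `S` differ by at most `1`; equivalently, for every `k ≥ 1`
with `L_k(S) ≠ A` one has `dim L_{k+1}(S) > dim L_k(S)`. -/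
theorem sliding_char_seq_steps_le_one
    {F B : Type*} [Field F] [NonUnitalNonAssocRing B] [Module F B]
    [SMulCommClass F B B] [IsScalarTower F B B] [FiniteDimensional F B]
    (hslide : IsSliding F (amul B))
    (S : Set B) (hSfin : S.Finite) (hSgen : Generates F (amul B) S) :
    ∀ k : ℕ, 1 ≤ k → Lset F (amul B) S k ≠ ⊤ →
      finrank F (Lset F (amul B) S k) < finrank F (Lset F (amul B) S (k + 1)) :=
  fun _ hk hne => finrank_lt_finrank_of_lt <|
    sliding_char_seq_steps_le_one_general (LinearMap.mul F B) hslide hSgen hk hne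
end

section
/- For every field F and every integer d ≥ 3, the d-dimensional F-algebra C_d with basis x_1, …, x_d and multiplication determined by x_1 x_i = x_{i+1} for i = 1, …, d−1, all other products of basis elements being zero, is a Novikov algebra and l(C_d) = d. -/
/-!
Framework: length of finite-dimensional not necessarily associative,
not necessarily unital algebras (non-unital convention: `L_0(S) = 0`).
The multiplication of the algebra is passed explicitly as a binary
operation `μ`, so that the same definitions apply to an algebra, to its
commutator algebra, to a Lie bracket, etc.
-/

open Submodule Module

/-!
In `C_d` all left multiplications are multiples of one operator: `x * y = φ x • T y`, where `T` is
the nilpotent shift of the basis and `φ` is the first coordinate, which vanishes on the range of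
`T`. Hence `(x * y) * z = 0` and `x * (y * z) = φ x • φ y • T (T z)` is symmetric in `x` and `y`,
which gives the Novikov identities. A word of length `n + 1` in `S` is a multiple of `T ^ n s` with
`s ∈ S`, so words longer than `d` vanish and every generating set has length at most `d`. The single
element `x_1` generates, and `L_k({x_1})` is spanned by the `k` vectors `T ^ i x_1` with `i < k`, so
it cannot be everything before `k = d`.
-/

/-- The multiplication of `B` has the form `x * y = φ x • T y` with `φ` vanishing on the range of
`T`; thus the left multiplications of `B` are the multiples of the single operator `T`. -/
structure HasRankOneLeftMul {R B : Type*} [CommSemiring R] [NonUnitalNonAssocSemiring B]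
    [Module R B] (φ : B →ₗ[R] R) (T : End R B) : Prop where
  mul_eq_smul (x y : B) : x * y = φ x • T y
  apply_apply_eq_zero (x : B) : φ (T x) = 0

namespace HasRankOneLeftMul

section CommSemiring

variable {R B : Type*} [CommSemiring R] [NonUnitalNonAssocSemiring B] [Module R B]
  {φ : B →ₗ[R] R} {T : End R B}

theorem mul_mul_eq_zero (h : HasRankOneLeftMul φ T) (x y z : B) : x * y * z = 0 := by
  simp [h.mul_eq_smul, h.apply_apply_eq_zero]

theorem mul_left_comm (h : HasRankOneLeftMul φ T) (x y z : B) : x * (y * z) = y * (x * z) := by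
  simp only [h.mul_eq_smul, map_smul, smul_comm (φ x)]

theorem exists_eq_smul_pow_apply_of_isWord (h : HasRankOneLeftMul φ T) {S : Set B} {k : ℕ} {w : B}
    (hw : IsWord (amul B) S k w) :
    ∃ n, k = n + 1 ∧ ∃ c : R, ∃ s ∈ S, w = c • (T ^ n) s := by
  induction hw with
  | @base s hs => exact ⟨0, rfl, 1, s, hs, by simp⟩
  | @mul _ _ x y _ _ ihx ihy =>
    obtain ⟨m, rfl, c, s, -, rfl⟩ := ihx
    obtain ⟨n, rfl, c', s', hs', rfl⟩ := ihy
    refine ⟨m + 1 + n, by omega, ?_⟩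
    cases m with
    | zero =>
      refine ⟨φ (c • s) * c', s', hs', ?_⟩
      simp only [amul, h.mul_eq_smul, pow_zero, End.one_apply, map_smul, zero_add, pow_add, pow_one,
        End.mul_apply, smul_smul]
    | succ m =>
      refine ⟨0, s', hs', ?_⟩
      simp [amul, h.mul_eq_smul, pow_succ', h.apply_apply_eq_zero]

theorem isWord_pow_apply (h : HasRankOneLeftMul φ T) {S : Set B} {e s : B} (he : e ∈ S)
    (hφe : φ e = 1) (hs : s ∈ S) (n : ℕ) : IsWord (amul B) S (n + 1) ((T ^ n) s) := by
  induction n with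
  | zero => exact .base hs
  | succ n ih =>
    have hTn : (T ^ (n + 1)) s = amul B e ((T ^ n) s) := by
      rw [amul, h.mul_eq_smul, hφe, one_smul, pow_succ', End.mul_apply]
    rw [hTn, add_comm (n + 1) 1]
    exact .mul (.base he) ih

end CommSemiring

section Novikov

variable {R B : Type*} [CommSemiring R] [NonUnitalNonAssocRing B] [Module R B]
  {φ : B →ₗ[R] R} {T : End R B}

theorem novikov_left_symm (h : HasRankOneLeftMul φ T) (x y z : B) :
    x * (y * z) - (x * y) * z = y * (x * z) - (y * x) * z := by
  rw [h.mul_mul_eq_zero, h.mul_mul_eq_zero, h.mul_left_comm]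

theorem novikov_right_comm (h : HasRankOneLeftMul φ T) (x y z : B) : (x * y) * z = (x * z) * y := by
  rw [h.mul_mul_eq_zero, h.mul_mul_eq_zero]

end Novikov

section Length

variable {F B : Type*} [Field F] [NonUnitalNonAssocRing B] [Module F B]
  {φ : B →ₗ[F] F} {T : End F B}

theorem Lset_eq_top_of_pow_eq_zero (h : HasRankOneLeftMul φ T) {d : ℕ} (hT : T ^ d = 0) {S : Set B}
    (hS : Generates F (amul B) S) : Lset F (amul B) S d = ⊤ := by
  rw [Generates] at hS
  rw [eq_top_iff, ← hS, span_le]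
  rintro w ⟨k, hw⟩
  obtain hk | hk := le_or_gt k d
  · exact subset_span ⟨k, hk, hw⟩
  · obtain ⟨n, rfl, c, s, -, rfl⟩ := h.exists_eq_smul_pow_apply_of_isWord hw
    simp [pow_eq_zero_of_le (Nat.lt_succ_iff.mp hk) hT]

theorem lenSet_le_of_pow_eq_zero (h : HasRankOneLeftMul φ T) {d : ℕ} (hT : T ^ d = 0) {S : Set B}
    (hS : Generates F (amul B) S) : lenSet F (amul B) S ≤ d :=
  Nat.sInf_le (h.Lset_eq_top_of_pow_eq_zero hT hS)

theorem generates_of_span_pow_eq_top (h : HasRankOneLeftMul φ T) {S : Set B} {e : B} (he : e ∈ S)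
    (hφe : φ e = 1) (hspan : span F (Set.range fun n : ℕ => (T ^ n) e) = ⊤) :
    Generates F (amul B) S := by
  rw [Generates, eq_top_iff, ← hspan]
  refine span_mono ?_
  rintro _ ⟨n, rfl⟩
  exact ⟨n + 1, h.isWord_pow_apply he hφe he n⟩

theorem Lset_singleton_le_span_pow (h : HasRankOneLeftMul φ T) (e : B) (k : ℕ) :
    Lset F (amul B) {e} k ≤ span F (Set.range fun i : Fin k => (T ^ (i : ℕ)) e) := by
  rw [Lset, span_le]
  rintro w ⟨m, hm, hw⟩
  obtain ⟨n, rfl, c, s, rfl, rfl⟩ := h.exists_eq_smul_pow_apply_of_isWord hw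
  exact smul_mem _ c (subset_span ⟨⟨n, hm⟩, rfl⟩)

theorem finrank_le_of_Lset_singleton_eq_top (h : HasRankOneLeftMul φ T) {e : B} {k : ℕ}
    (hk : Lset F (amul B) {e} k = ⊤) : finrank F B ≤ k := by
  have hspan : span F (Set.range fun i : Fin k => (T ^ (i : ℕ)) e) = ⊤ :=
    top_le_iff.mp (hk ▸ h.Lset_singleton_le_span_pow e k)
  calc finrank F B = (Set.range fun i : Fin k => (T ^ (i : ℕ)) e).finrank F := by
        rw [Set.finrank, hspan, finrank_top]
    _ ≤ Fintype.card (Fin k) := finrank_range_le_card _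
    _ = k := Fintype.card_fin k

theorem lenSet_singleton_eq_finrank (h : HasRankOneLeftMul φ T) (hT : T ^ finrank F B = 0) {e : B}
    (he : Generates F (amul B) {e}) : lenSet F (amul B) {e} = finrank F B :=
  (h.lenSet_le_of_pow_eq_zero hT he).antisymm <|
    le_csInf ⟨_, h.Lset_eq_top_of_pow_eq_zero hT he⟩
      fun _ hk => h.finrank_le_of_Lset_singleton_eq_top hk

end Length

end HasRankOneLeftMul

section BasisShift

variable {R M : Type*} [CommSemiring R] [AddCommMonoid M] [Module R M] {d : ℕ}

/-- The nilpotent shift `b 0 ↦ b 1 ↦ ⋯ ↦ b (d - 1) ↦ 0` along a basis: left multiplication by `x_1`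
in `C_d`. -/
noncomputable def basisShift (b : Basis (Fin d) R M) : End R M :=
  b.constr R fun j => if h : (j : ℕ) + 1 < d then b ⟨(j : ℕ) + 1, h⟩ else 0

theorem basisShift_apply_basis (b : Basis (Fin d) R M) (j : Fin d) :
    basisShift b (b j) = if h : (j : ℕ) + 1 < d then b ⟨(j : ℕ) + 1, h⟩ else 0 :=
  b.constr_basis R _ j

theorem basisShift_pow_apply_basis (b : Basis (Fin d) R M) (k : ℕ) (j : Fin d) :
    (basisShift b ^ k) (b j) = if h : (j : ℕ) + k < d then b ⟨(j : ℕ) + k, h⟩ else 0 := by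
  induction k with
  | zero => simp
  | succ k ih =>
    rw [pow_succ', End.mul_apply, ih]
    by_cases hk : (j : ℕ) + k < d
    · simp only [hk, dite_true, basisShift_apply_basis, add_assoc]
    · have hk' : ¬ (j : ℕ) + (k + 1) < d := by omega
      simp [hk, hk']

theorem basisShift_pow_eq_zero (b : Basis (Fin d) R M) : basisShift b ^ d = 0 :=
  b.ext fun j => by simp [basisShift_pow_apply_basis]

theorem span_basisShift_pow_apply_zero [NeZero d] (b : Basis (Fin d) R M) :
    span R (Set.range fun n : ℕ => (basisShift b ^ n) (b 0)) = ⊤ := by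
  rw [eq_top_iff, ← b.span_eq]
  refine span_mono ?_
  rintro _ ⟨j, rfl⟩
  exact ⟨j, by simp [basisShift_pow_apply_basis]⟩

theorem coord_zero_basisShift_apply [NeZero d] (b : Basis (Fin d) R M) (x : M) :
    b.coord 0 (basisShift b x) = 0 := by
  suffices hcomp : b.coord 0 ∘ₗ basisShift b = 0 from LinearMap.congr_fun hcomp x
  refine b.ext fun j => ?_
  rw [LinearMap.comp_apply, basisShift_apply_basis]
  split_ifs with hj
  · have hne : (⟨(j : ℕ) + 1, hj⟩ : Fin d) ≠ 0 := Fin.val_ne_zero_iff.mp (Nat.succ_ne_zero j)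
    simp [Finsupp.single_eq_of_ne hne.symm]
  · simp

end BasisShift

theorem hasRankOneLeftMul_coord_basisShift {R B : Type*} [CommSemiring R]
    [NonUnitalNonAssocSemiring B] [Module R B] [SMulCommClass R B B] [IsScalarTower R B B]
    {d : ℕ} [NeZero d] (b : Basis (Fin d) R B)
    (hmul : ∀ i j : Fin d, b i * b j =
      if h : (i : ℕ) = 0 ∧ (j : ℕ) + 1 < d then b ⟨(j : ℕ) + 1, h.2⟩ else 0) :
    HasRankOneLeftMul (b.coord 0) (basisShift b) where
  mul_eq_smul x y := by
    suffices hbilin : LinearMap.mul R B = (b.coord 0).smulRight (basisShift b) from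
      LinearMap.congr_fun₂ hbilin x y
    refine b.ext fun i => b.ext fun j => ?_
    by_cases hi : i = 0
    · simp [hi, hmul, basisShift_apply_basis]
    · have hi' : (i : ℕ) ≠ 0 := Fin.val_ne_zero_iff.mpr hi
      simp [hi, hi', hmul]
  apply_apply_eq_zero := coord_zero_basisShift_apply b

theorem novikov_example_length_eq_dim_general
    {F B : Type*} [Field F] [NonUnitalNonAssocRing B] [Module F B]
    [SMulCommClass F B B] [IsScalarTower F B B]
    (d : ℕ) [NeZero d] (b : Basis (Fin d) F B)
    (hmul : ∀ i j : Fin d, b i * b j =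
      if h : (i : ℕ) = 0 ∧ (j : ℕ) + 1 < d then b ⟨(j : ℕ) + 1, h.2⟩ else 0) :
    (∀ x y z : B, x * (y * z) - (x * y) * z = y * (x * z) - (y * x) * z) ∧
    (∀ x y z : B, (x * y) * z = (x * z) * y) ∧
    (∀ S : Set B, Generates F (amul B) S → lenSet F (amul B) S ≤ d) ∧
    (∃ S : Set B, S.Finite ∧ Generates F (amul B) S ∧ lenSet F (amul B) S = d) := by
  have h := hasRankOneLeftMul_coord_basisShift b hmul
  have hT : basisShift b ^ d = 0 := basisShift_pow_eq_zero b
  have hdim : finrank F B = d := (finrank_eq_card_basis b).trans (Fintype.card_fin d)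
  have hgen : Generates F (amul B) {b 0} :=
    h.generates_of_span_pow_eq_top rfl (by simp) (span_basisShift_pow_apply_zero b)
  have hlen : lenSet F (amul B) {b 0} = d :=
    (h.lenSet_singleton_eq_finrank (hdim.symm ▸ hT) hgen).trans hdim
  exact ⟨h.novikov_left_symm, h.novikov_right_comm, fun S => h.lenSet_le_of_pow_eq_zero hT,
    {b 0}, Set.finite_singleton _, hgen, hlen⟩

/-- for `d ≥ 3`, the `d`-dimensional algebra `C_d` with basis
`x_1, …, x_d` (here `b 0, …, b (d-1)`) and multiplication `x_1 x_i = x_{i+1}`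
(`i = 1, …, d−1`), other products of basis vectors being zero, is a Novikov algebra
and `l(C_d) = d`. -/
theorem novikov_example_length_eq_dim
    {F B : Type*} [Field F] [NonUnitalNonAssocRing B] [Module F B]
    [SMulCommClass F B B] [IsScalarTower F B B]
    (d : ℕ) (hd : 3 ≤ d) (b : Basis (Fin d) F B)
    (hmul : ∀ i j : Fin d, b i * b j =
      if h : (i : ℕ) = 0 ∧ (j : ℕ) + 1 < d then b ⟨(j : ℕ) + 1, h.2⟩ else 0) :
    (∀ x y z : B, x * (y * z) - (x * y) * z = y * (x * z) - (y * x) * z) ∧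
    (∀ x y z : B, (x * y) * z = (x * z) * y) ∧
    (∀ S : Set B, S.Finite → Generates F (amul B) S → lenSet F (amul B) S ≤ d) ∧
    (∃ S : Set B, S.Finite ∧ Generates F (amul B) S ∧ lenSet F (amul B) S = d) := by
  have : NeZero d := ⟨by omega⟩
  obtain ⟨hleft, hright, hle, heq⟩ := novikov_example_length_eq_dim_general d b hmul
  exact ⟨hleft, hright, fun S _ => hle S, heq⟩
end
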